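/- (Shapley Feature Value characterization, Theorem 1.) Let N be a finite set of n features. Suppose ψ assigns to every game v : 𝒫(N) → ℝ with v(∅) = 0 a vector (ψ_a(v))_{a ∈ N} satisfying: (i) transferability/efficiency, ∑_{a ∈ N} ψ_a(v) = v(N); (ii) null contribution, if v(S ∪ {a}) = v(S) for all S ⊆ N \ {a} then ψ_a(v) = 0; (iii) symmetry, if v(S ∪ {a}) = v(S ∪ {b}) for all S ⊆ N \ {a,b} then ψ_a(v) = ψ_b(v); and (iv) linearity, ψ_a(v₁ + v₂) = ψ_a(v₁) + ψ_a(v₂) and ψ_a(c·v) = c·ψ_a(v) for all games v₁, v₂, v, all c ∈ ℝ, and all a ∈ N. Then ψ is the Shapley feature value: for every game v and every a ∈ N, ψ_a(v) = ∑_{S ⊆ N \ {a}} (|S|!(n−|S|−1)!/n!)(v(S ∪ {a}) − v(S)). -/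

import Mathlib

/-!
Up to its worth on coalitions not contained in `N`, which null contribution makes irrelevant, a game
`v` is the sum over `T ⊆ N` of the games `Pi.single T (v T)`, worth `v T` to `T` and `0` to every
other coalition. By additivity it is enough to know `ψ` on these.

If `b ∈ N \ T`, then `b` is null in `Pi.single T c + Pi.single (insert b T) c`. Hence a feature
outside `T` receives the negative of what it receives in `Pi.single (insert b T) c`. By symmetry the
members of `T` all receive the same payoff, and efficiency then expresses `|T|` times this payoff
through the payoffs in the games `Pi.single (insert b T) c`. Downward induction on `T`, starting at
`N`, shows that the payoff is `c` times the Shapley weight of a coalition of size `|T| - 1`.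
Finally, the coalitions `S` and `insert a S` together contribute to `ψ v a` the weighted marginal
contribution of `a` to `S`.
-/

open Finset

/-- The Shapley feature value of feature `a` in the game `v` over `N`. -/
noncomputable def shapleyFeatureValue {ι : Type*} [DecidableEq ι]
    (N : Finset ι) (v : Finset ι → ℝ) (a : ι) : ℝ :=
  ∑ S ∈ (N.erase a).powerset,
    ((Nat.factorial S.card * Nat.factorial (N.card - S.card - 1) : ℝ) /
        (Nat.factorial N.card : ℝ)) * (v (insert a S) - v S)

section Axioms

variable {ι : Type*} [DecidableEq ι]

/-- Transferability: the payoffs add up to the worth of the grand coalition. As in the other axioms,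
a game is a function on all of `Finset ι` that vanishes at `∅`. -/
def IsEfficientValue (N : Finset ι) (ψ : (Finset ι → ℝ) → ι → ℝ) : Prop :=
  ∀ v : Finset ι → ℝ, v ∅ = 0 → ∑ a ∈ N, ψ v a = v N

/-- Null contribution: a feature that changes the worth of no coalition receives nothing. -/
def IsNullValue (N : Finset ι) (ψ : (Finset ι → ℝ) → ι → ℝ) : Prop :=
  ∀ v : Finset ι → ℝ, v ∅ = 0 → ∀ a ∈ N,
    (∀ S ⊆ N.erase a, v (insert a S) = v S) → ψ v a = 0

/-- Symmetry: interchangeable features receive the same payoff. -/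
def IsSymmetricValue (N : Finset ι) (ψ : (Finset ι → ℝ) → ι → ℝ) : Prop :=
  ∀ v : Finset ι → ℝ, v ∅ = 0 → ∀ a ∈ N, ∀ b ∈ N,
    (∀ S ⊆ (N.erase a).erase b, v (insert a S) = v (insert b S)) → ψ v a = ψ v b

/-- Additivity: the part of linearity that concerns sums of games. -/
def IsAdditiveValue (N : Finset ι) (ψ : (Finset ι → ℝ) → ι → ℝ) : Prop :=
  ∀ v₁ v₂ : Finset ι → ℝ, v₁ ∅ = 0 → v₂ ∅ = 0 → ∀ a ∈ N, ψ (v₁ + v₂) a = ψ v₁ a + ψ v₂ a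

end Axioms

/-- The coefficient, in the Shapley value over `n` features, of the marginal contribution to a
coalition of size `s`. It is meaningful for `s < n` only, because of the truncated subtraction. -/
noncomputable def shapleyWeight (n s : ℕ) : ℝ :=
  (Nat.factorial s * Nat.factorial (n - s - 1) : ℝ) / (Nat.factorial n : ℝ)

lemma succ_mul_shapleyWeight_self (s : ℕ) : (s + 1 : ℝ) * shapleyWeight (s + 1) s = 1 := by
  simp only [shapleyWeight, Nat.add_sub_cancel_left, Nat.sub_self, Nat.factorial_succ,
    Nat.factorial_zero]
  push_cast
  field_simp

lemma succ_mul_shapleyWeight {n s : ℕ} (h : s + 1 < n) :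
    (s + 1 : ℝ) * shapleyWeight n s = (n - (s + 1) : ℕ) * shapleyWeight n (s + 1) := by
  obtain ⟨k, rfl⟩ : ∃ k, n = s + 1 + k + 1 := Nat.exists_eq_add_of_lt h
  have hs : s + 1 + k + 1 - s - 1 = k + 1 := by omega
  have hs' : s + 1 + k + 1 - (s + 1) = k + 1 := by omega
  simp only [shapleyWeight, hs, hs', Nat.add_sub_cancel, Nat.factorial_succ s,
    Nat.factorial_succ k]
  push_cast
  ring

section Value

variable {ι : Type*} {N : Finset ι} {ψ : (Finset ι → ℝ) → ι → ℝ}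

lemma IsAdditiveValue.value_zero (hadd : IsAdditiveValue N ψ) {a : ι} (ha : a ∈ N) :
    ψ 0 a = 0 := by
  simpa using hadd 0 0 rfl rfl a ha

lemma IsAdditiveValue.value_sum (hadd : IsAdditiveValue N ψ) {κ : Type*} {F : Finset κ}
    {v : κ → Finset ι → ℝ} (hv : ∀ i ∈ F, v i ∅ = 0) {a : ι} (ha : a ∈ N) :
    ψ (∑ i ∈ F, v i) a = ∑ i ∈ F, ψ (v i) a := by
  induction F using Finset.cons_induction with
  | empty => simpa using hadd.value_zero ha
  | cons i F hi ih =>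
    obtain ⟨hvi, hvF⟩ := (forall_mem_cons hi _).1 hv
    have hsum : (∑ j ∈ F, v j) ∅ = 0 := by rw [Finset.sum_apply, sum_eq_zero hvF]
    rw [sum_cons, sum_cons, hadd _ _ hvi hsum a ha, ih hvF]

variable [DecidableEq ι]

lemma single_apply_empty {M : Type*} [Zero M] {T : Finset ι} (hT : T.Nonempty) (c : M) :
    (Pi.single T c : Finset ι → M) ∅ = 0 :=
  Pi.single_eq_of_ne (M := fun _ => M) hT.ne_empty.symm c

lemma single_apply_self_empty {M : Type*} [Zero M] {v : Finset ι → M} (hv : v ∅ = 0)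
    (T : Finset ι) : (Pi.single T (v T) : Finset ι → M) ∅ = 0 := by
  obtain rfl | hT := T.eq_empty_or_nonempty
  · rw [Pi.single_eq_same, hv]
  · exact single_apply_empty hT (v T)

lemma IsAdditiveValue.value_congr (hadd : IsAdditiveValue N ψ) (hnull : IsNullValue N ψ)
    {v w : Finset ι → ℝ} (hv : v ∅ = 0) (hvw : ∀ S ⊆ N, v S = w S) {a : ι} (ha : a ∈ N) :
    ψ v a = ψ w a := by
  have hw : w ∅ = 0 := by rw [← hvw ∅ (empty_subset N), hv]
  have hdiff : ∀ S ⊆ N, (v - w) S = 0 := fun S hS => sub_eq_zero.2 (hvw S hS)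
  have hdiff_null : ψ (v - w) a = 0 := by
    refine hnull _ (hdiff ∅ (empty_subset N)) a ha fun S hS => ?_
    have hSN : S ⊆ N := hS.trans (erase_subset a N)
    rw [hdiff _ (insert_subset ha hSN), hdiff S hSN]
  calc ψ v a = ψ (w + (v - w)) a := by rw [add_sub_cancel]
    _ = ψ w a + ψ (v - w) a := hadd _ _ hw (hdiff ∅ (empty_subset N)) a ha
    _ = ψ w a := by rw [hdiff_null, add_zero]

lemma IsAdditiveValue.value_eq_sum_single (hadd : IsAdditiveValue N ψ) (hnull : IsNullValue N ψ)
    {v : Finset ι → ℝ} (hv : v ∅ = 0) {a : ι} (ha : a ∈ N) :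
    ψ v a = ∑ T ∈ N.powerset, ψ (Pi.single T (v T)) a := by
  rw [← hadd.value_sum (fun T _ => single_apply_self_empty hv T) ha]
  refine hadd.value_congr hnull hv (fun S hS => ?_) ha
  rw [Finset.sum_apply, sum_pi_single, if_pos (mem_powerset.2 hS)]

lemma IsAdditiveValue.value_single_of_notMem (hadd : IsAdditiveValue N ψ)
    (hnull : IsNullValue N ψ) {T : Finset ι} {c : ℝ}
    (hTc : (Pi.single T c : Finset ι → ℝ) ∅ = 0) {b : ι} (hb : b ∈ N) (hbT : b ∉ T) :
    ψ (Pi.single T c) b = -ψ (Pi.single (insert b T) c) b := by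
  have hTc' := single_apply_empty (insert_nonempty b T) c
  rw [eq_neg_iff_add_eq_zero, ← hadd _ _ hTc hTc' b hb]
  refine hnull _ (by rw [Pi.add_apply, hTc, hTc', add_zero]) b hb fun S hS => ?_
  have hbS : b ∉ S := fun h => notMem_erase b N (hS h)
  have hne : insert b S ≠ T := fun h => hbT (h ▸ mem_insert_self b S)
  have hne' : S ≠ insert b T := fun h => hbS (h ▸ mem_insert_self b T)
  have hiff : insert b S = insert b T ↔ S = T :=
    ⟨fun h => by rw [← erase_insert hbS, h, erase_insert hbT], fun h => by rw [h]⟩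
  simp [Pi.single_apply, hne, hne', hiff]

lemma IsSymmetricValue.value_single_eq (hsym : IsSymmetricValue N ψ) {T : Finset ι} (hTN : T ⊆ N)
    (c : ℝ) {a b : ι} (ha : a ∈ T) (hb : b ∈ T) :
    ψ (Pi.single T c) a = ψ (Pi.single T c) b := by
  obtain rfl | hab := eq_or_ne a b
  · rfl
  refine hsym _ (single_apply_empty ⟨a, ha⟩ c) a (hTN ha) b (hTN hb) fun S hS => ?_
  have haS : a ∉ S := fun h => by simpa using hS h
  have hbS : b ∉ S := fun h => by simpa using hS h
  have hne_a : insert a S ≠ T := by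
    rintro rfl
    exact (mem_insert.1 hb).elim hab.symm hbS
  have hne_b : insert b S ≠ T := by
    rintro rfl
    exact (mem_insert.1 ha).elim hab haS
  rw [Pi.single_eq_of_ne hne_a, Pi.single_eq_of_ne hne_b]

lemma IsSymmetricValue.sum_value_single (hsym : IsSymmetricValue N ψ) {T : Finset ι} (hTN : T ⊆ N)
    (c : ℝ) {a : ι} (ha : a ∈ T) :
    ∑ b ∈ T, ψ (Pi.single T c) b = #T * ψ (Pi.single T c) a := by
  rw [sum_congr rfl fun b hb => hsym.value_single_eq hTN c hb ha, sum_const, nsmul_eq_mul]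

lemma IsEfficientValue.card_mul_value_single_self (heff : IsEfficientValue N ψ)
    (hsym : IsSymmetricValue N ψ) (c : ℝ) {a : ι} (ha : a ∈ N) :
    #N * ψ (Pi.single N c) a = c := by
  rw [← hsym.sum_value_single Subset.rfl c ha, heff _ (single_apply_empty ⟨a, ha⟩ c),
    Pi.single_eq_same]

lemma IsEfficientValue.card_mul_value_single (heff : IsEfficientValue N ψ)
    (hnull : IsNullValue N ψ) (hsym : IsSymmetricValue N ψ) (hadd : IsAdditiveValue N ψ)
    {T : Finset ι} (hTN : T ⊂ N) (c : ℝ) {a : ι} (ha : a ∈ T) :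
    #T * ψ (Pi.single T c) a = ∑ b ∈ N \ T, ψ (Pi.single (insert b T) c) b := by
  have hTc := single_apply_empty ⟨a, ha⟩ c
  have htotal : ∑ b ∈ N, ψ (Pi.single T c) b = 0 := by
    rw [heff _ hTc, Pi.single_eq_of_ne hTN.ne']
  have houtside : ∑ b ∈ N \ T, ψ (Pi.single T c) b =
      -∑ b ∈ N \ T, ψ (Pi.single (insert b T) c) b := by
    rw [← sum_neg_distrib]
    refine sum_congr rfl fun b hb => ?_
    obtain ⟨hbN, hbT⟩ := mem_sdiff.1 hb
    exact hadd.value_single_of_notMem hnull hTc hbN hbT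
  rw [← sum_sdiff hTN.subset, houtside, hsym.sum_value_single hTN.subset c ha] at htotal
  linarith

lemma IsEfficientValue.value_single_of_mem (heff : IsEfficientValue N ψ)
    (hnull : IsNullValue N ψ) (hsym : IsSymmetricValue N ψ) (hadd : IsAdditiveValue N ψ)
    {T : Finset ι} (hTN : T ⊆ N) {s : ℕ} (hT : #T = s + 1) (c : ℝ) {a : ι} (ha : a ∈ T) :
    ψ (Pi.single T c) a = shapleyWeight #N s * c := by
  have hT_real : (#T : ℝ) = s + 1 := by rw [hT, Nat.cast_add_one]
  refine mul_left_cancel₀ (Nat.cast_add_one_ne_zero s : (s + 1 : ℝ) ≠ 0) ?_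
  obtain rfl | hlt := hTN.eq_or_ssubset
  · rw [← hT_real, heff.card_mul_value_single_self hsym c ha, hT_real, hT, ← mul_assoc,
      succ_mul_shapleyWeight_self, one_mul]
  have hinsert : ∀ b ∈ N \ T,
      ψ (Pi.single (insert b T) c) b = shapleyWeight #N (s + 1) * c := by
    intro b hb
    obtain ⟨hbN, hbT⟩ := mem_sdiff.1 hb
    have hcard : #(insert b T) = s + 1 + 1 := by rw [card_insert_of_notMem hbT, hT]
    exact heff.value_single_of_mem hnull hsym hadd (insert_subset hbN hTN) hcard c
      (mem_insert_self b T)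
  calc (s + 1 : ℝ) * ψ (Pi.single T c) a
      = ∑ b ∈ N \ T, ψ (Pi.single (insert b T) c) b := by
        rw [← hT_real, heff.card_mul_value_single hnull hsym hadd hlt c ha]
    _ = (#N - (s + 1) : ℕ) * (shapleyWeight #N (s + 1) * c) := by
        rw [sum_congr rfl hinsert, sum_const, card_sdiff_of_subset hTN, hT, nsmul_eq_mul]
    _ = (s + 1) * (shapleyWeight #N s * c) := by
        rw [← mul_assoc, ← succ_mul_shapleyWeight (hT ▸ card_lt_card hlt), mul_assoc]
termination_by #N - #T
decreasing_by
  have := card_lt_card hlt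
  omega

lemma IsEfficientValue.value_single_add_value_single_insert (heff : IsEfficientValue N ψ)
    (hnull : IsNullValue N ψ) (hsym : IsSymmetricValue N ψ) (hadd : IsAdditiveValue N ψ)
    {S : Finset ι} {c : ℝ} (hSc : (Pi.single S c : Finset ι → ℝ) ∅ = 0) (d : ℝ) {a : ι}
    (ha : a ∈ N) (hS : S ⊆ N.erase a) :
    ψ (Pi.single S c) a + ψ (Pi.single (insert a S) d) a = shapleyWeight #N #S * (d - c) := by
  obtain ⟨hSN, haS⟩ := subset_erase.1 hS
  have hvalue : ∀ x : ℝ, ψ (Pi.single (insert a S) x) a = shapleyWeight #N #S * x := fun x =>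
    heff.value_single_of_mem hnull hsym hadd (insert_subset ha hSN)
      (card_insert_of_notMem haS) x (mem_insert_self a S)
  rw [hadd.value_single_of_notMem hnull hSc ha haS, hvalue, hvalue]
  ring

theorem shapley_characterization_general (heff : IsEfficientValue N ψ) (hnull : IsNullValue N ψ)
    (hsym : IsSymmetricValue N ψ) (hadd : IsAdditiveValue N ψ) {v : Finset ι → ℝ} (hv : v ∅ = 0)
    {a : ι} (ha : a ∈ N) :
    ψ v a = shapleyFeatureValue N v a := by
  calc ψ v a = ∑ T ∈ (insert a (N.erase a)).powerset, ψ (Pi.single T (v T)) a := by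
        rw [insert_erase ha, hadd.value_eq_sum_single hnull hv ha]
    _ = ∑ S ∈ (N.erase a).powerset,
          (ψ (Pi.single S (v S)) a + ψ (Pi.single (insert a S) (v (insert a S))) a) := by
        rw [sum_powerset_insert (notMem_erase a N), sum_add_distrib]
    _ = ∑ S ∈ (N.erase a).powerset, shapleyWeight #N #S * (v (insert a S) - v S) :=
        sum_congr rfl fun S hS => heff.value_single_add_value_single_insert hnull hsym hadd
          (single_apply_self_empty hv S) _ ha (mem_powerset.1 hS)
    _ = shapleyFeatureValue N v a := rfl

end Value

/-- Shapley Feature Value characterization (Theorem 1): any value `ψ`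
satisfying transferability/efficiency, null contribution, symmetry and
linearity coincides with the Shapley feature value. -/
theorem shapley_characterization {ι : Type*} [DecidableEq ι]
    (N : Finset ι) (ψ : (Finset ι → ℝ) → ι → ℝ)
    (heff : ∀ v : Finset ι → ℝ, v ∅ = 0 → ∑ a ∈ N, ψ v a = v N)
    (hnull : ∀ v : Finset ι → ℝ, v ∅ = 0 → ∀ a ∈ N,
      (∀ S ⊆ N.erase a, v (insert a S) = v S) → ψ v a = 0)
    (hsym : ∀ v : Finset ι → ℝ, v ∅ = 0 → ∀ a ∈ N, ∀ b ∈ N,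
      (∀ S ⊆ (N.erase a).erase b, v (insert a S) = v (insert b S)) →
        ψ v a = ψ v b)
    (hadd : ∀ v₁ v₂ : Finset ι → ℝ, v₁ ∅ = 0 → v₂ ∅ = 0 → ∀ a ∈ N,
      ψ (fun S => v₁ S + v₂ S) a = ψ v₁ a + ψ v₂ a)
    (hsmul : ∀ v : Finset ι → ℝ, v ∅ = 0 → ∀ c : ℝ, ∀ a ∈ N,
      ψ (fun S => c * v S) a = c * ψ v a) :
    ∀ v : Finset ι → ℝ, v ∅ = 0 → ∀ a ∈ N,
      ψ v a = shapleyFeatureValue N v a := fun _ hv _ ha =>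
  shapley_characterization_general heff hnull hsym hadd hv ha
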